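/- arXiv:2101.11542 — 2 statements merged into one kernel-verified Lean document; each statement's English description precedes it below -/
import Mathlib

section
/- Let m be a positive integer, R ⊆ {0,1,…,m−1}, and let A be the set of positive integers a with (a mod m) ∈ R. Then for every ε > 0 there exists N such that for all n ≥ N, the number p_A(n) of partitions of n with all parts in A satisfies p_A(n) ≤ exp((1+ε) · π · √(2·n·|R| / (3·m))). -/
/-- `partitionsIn S n` is the number of partitions of `n` with all parts in `S`. -/
noncomputable def partitionsIn (S : Set ℕ) (n : ℕ) : ℕ :=
  Nat.card {p : n.Partition // ∀ a ∈ p.parts, a ∈ S}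

open Finset in
lemma aux_partition_bound (A : Set ℕ) (n : ℕ) (S : Finset ℕ)
    (hS : ∀ a, a ∈ S ↔ (a ∈ A ∧ 1 ≤ a ∧ a ≤ n)) (x : ℝ) (hx0 : 0 < x) (hx1 : x < 1) :
    (partitionsIn A n : ℝ) * x ^ n ≤ ∏ a ∈ S, (1 - x ^ a)⁻¹ := by
  classical
  have hmem : ∀ p : {p : n.Partition // ∀ a ∈ p.parts, a ∈ A}, ∀ a ∈ p.1.parts, a ∈ S := by
    intro p a ha
    rw [hS]
    exact ⟨p.2 a ha, p.1.parts_pos ha, p.1.le_of_mem_parts ha⟩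
  have h1 : ∏ a : S, ∑ i ∈ range (n+1), (x ^ (a : ℕ)) ^ i ≤ ∏ a ∈ S, (1 - x ^ a)⁻¹ := by
    rw [← Finset.prod_coe_sort S (fun a => (1 - x ^ a)⁻¹)]
    apply Finset.prod_le_prod
    · intro a _
      positivity
    · intro a _
      have ha : (a : ℕ) ≠ 0 := by
        have := (hS a).1 a.2
        omega
      have hl : x ^ (a : ℕ) < 1 := pow_lt_one₀ hx0.le hx1 ha
      have h0 : 0 ≤ x ^ (a : ℕ) := by positivity
      rw [← tsum_geometric_of_lt_one h0 hl]
      exact (summable_geometric_of_lt_one h0 hl).sum_le_tsum _ (fun i _ => by positivity)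
  refine le_trans ?_ h1
  rw [Finset.prod_univ_sum]
  let φ : {p : n.Partition // ∀ a ∈ p.parts, a ∈ A} → (S → ℕ) :=
    fun p a => p.1.parts.count (a : ℕ)
  have hφ : Function.Injective φ := by
    intro p q h
    apply Subtype.ext
    apply Nat.Partition.ext
    ext a
    by_cases ha : a ∈ S
    · exact congrFun h ⟨a, ha⟩
    · rw [Multiset.count_eq_zero_of_notMem (fun h' => ha (hmem p a h')),
        Multiset.count_eq_zero_of_notMem (fun h' => ha (hmem q a h'))]
  have hsum : ∀ p, ∏ a : S, (x ^ (a : ℕ)) ^ (φ p a) = x ^ n := by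
    intro p
    simp_rw [← pow_mul]
    rw [Finset.prod_pow_eq_pow_sum]
    congr 1
    rw [Finset.sum_coe_sort S (fun a => a * p.1.parts.count a)]
    have h2 := Finset.sum_multiset_count_of_subset p.1.parts S (by
      intro a ha
      exact hmem p a (Multiset.mem_toFinset.1 ha))
    rw [p.1.parts_sum] at h2
    refine Eq.trans ?_ h2.symm
    apply Finset.sum_congr rfl
    intro a _
    simp [mul_comm]
  have hle : ∑ f ∈ Finset.univ.image φ, ∏ a : S, (x ^ (a : ℕ)) ^ (f a) ≤
      ∑ f ∈ Fintype.piFinset (fun _ : S => range (n+1)), ∏ a : S, (x ^ (a : ℕ)) ^ (f a) := by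
    apply Finset.sum_le_sum_of_subset_of_nonneg
    · intro f hf
      obtain ⟨p, _, rfl⟩ := Finset.mem_image.1 hf
      rw [Fintype.mem_piFinset]
      intro a
      rw [Finset.mem_range, Nat.lt_succ_iff]
      have ha : 1 ≤ (a : ℕ) := ((hS a).1 a.2).2.1
      calc φ p a ≤ Multiset.card p.1.parts := Multiset.count_le_card _ _
        _ ≤ p.1.parts.sum := by
          have := Multiset.card_nsmul_le_sum (s := p.1.parts) (a := 1)
            (fun y hy => p.1.parts_pos hy)
          simpa using this
        _ = n := p.1.parts_sum
    · intro f _ _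
      positivity
  refine le_trans (le_of_eq ?_) hle
  rw [Finset.sum_image (fun a _ b _ h => hφ h)]
  simp_rw [hsum]
  simp [partitionsIn]

open Finset in
lemma aux_residue (m : ℕ) (hm : 0 < m) (R : Finset ℕ) (n : ℕ) (S : Finset ℕ)
    (hS : ∀ a ∈ S, (a % m ∈ R ∧ 1 ≤ a ∧ a ≤ n)) (y : ℝ) (hy0 : 0 < y) (hy1 : y < 1) :
    ∑ a ∈ S, y ^ a ≤ R.card * (y + y ^ m * (1 - y ^ m)⁻¹) := by
  classical
  let g : ℕ → ℝ := fun q => if q = 0 then y else (y ^ m) ^ q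
  have hg0 : ∀ q, 0 ≤ g q := by
    intro q
    simp only [g]
    split_ifs <;> positivity
  have hg : ∀ a ∈ S, y ^ a ≤ g (a / m) := by
    intro a ha
    simp only [g]
    split_ifs with h
    · simpa using pow_le_pow_of_le_one hy0.le hy1.le (hS a ha).2.1
    · rw [← pow_mul]
      exact pow_le_pow_of_le_one hy0.le hy1.le (Nat.mul_div_le a m)
  have hinj : Set.InjOn (fun a : ℕ => (a % m, a / m)) S := by
    intro a _ b _ h
    simp only [Prod.mk.injEq] at h
    rw [← Nat.mod_add_div a m, ← Nat.mod_add_div b m, h.1, h.2]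
  have hl : y ^ m < 1 := pow_lt_one₀ hy0.le hy1 hm.ne'
  have h0 : 0 ≤ y ^ m := by positivity
  calc ∑ a ∈ S, y ^ a ≤ ∑ a ∈ S, g (a / m) := Finset.sum_le_sum hg
    _ = ∑ z ∈ S.image (fun a : ℕ => (a % m, a / m)), g z.2 := by
      rw [Finset.sum_image hinj]
    _ ≤ ∑ z ∈ R ×ˢ range (n+1), g z.2 := by
      apply Finset.sum_le_sum_of_subset_of_nonneg
      · intro z hz
        obtain ⟨a, ha, rfl⟩ := Finset.mem_image.1 hz
        rw [Finset.mem_product]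
        refine ⟨(hS a ha).1, ?_⟩
        rw [Finset.mem_range, Nat.lt_succ_iff]
        exact (Nat.div_le_self a m).trans (hS a ha).2.2
      · intro z _ _
        exact hg0 _
    _ = R.card * ∑ q ∈ range (n+1), g q := by
      rw [Finset.sum_product]
      simp
    _ ≤ _ := by
      apply mul_le_mul_of_nonneg_left _ (Nat.cast_nonneg _)
      rw [Finset.sum_range_succ']
      have : ∑ k ∈ range n, g (k+1) ≤ y ^ m * (1 - y ^ m)⁻¹ := by
        simp only [g, Nat.succ_ne_zero, if_false, pow_succ']
        rw [← Finset.mul_sum]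
        apply mul_le_mul_of_nonneg_left _ h0
        have := (summable_geometric_of_lt_one h0 hl).sum_le_tsum (range n)
          (fun i _ => by positivity)
        rw [tsum_geometric_of_lt_one h0 hl] at this
        exact this
      have h2 : g 0 = y := by simp [g]
      linarith

open Finset in
lemma aux_log (m : ℕ) (hm : 0 < m) (R : Finset ℕ) (n : ℕ) (S : Finset ℕ)
    (hS : ∀ a ∈ S, (a % m ∈ R ∧ 1 ≤ a ∧ a ≤ n)) (t : ℝ) (ht : 0 < t) :
    ∑ a ∈ S, -Real.log (1 - Real.exp (-t) ^ a) ≤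
      R.card * (-Real.log (1 - Real.exp (-t)) + (m * t)⁻¹ * (Real.pi ^ 2 / 6)) := by
  have hx0 : 0 < Real.exp (-t) := Real.exp_pos _
  have hx1 : Real.exp (-t) < 1 := by
    rw [Real.exp_lt_one_iff]; linarith
  have hmt : 0 < (m : ℝ) * t := by positivity
  have H1 : HasSum (fun k : ℕ => ∑ a ∈ S, (Real.exp (-t) ^ a) ^ (k+1) / ((k : ℝ)+1))
      (∑ a ∈ S, -Real.log (1 - Real.exp (-t) ^ a)) := by
    apply hasSum_sum
    intro a ha
    apply Real.hasSum_pow_div_log_of_abs_lt_one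
    rw [abs_of_pos (by positivity)]
    exact pow_lt_one₀ hx0.le hx1 (by have := hS a ha; omega)
  have H2 := Real.hasSum_pow_div_log_of_abs_lt_one (x := Real.exp (-t))
    (by rw [abs_of_pos hx0]; exact hx1)
  have H3 : HasSum (fun k : ℕ => 1 / ((k : ℝ)+1)^2) (Real.pi ^ 2 / 6) := by
    have := (hasSum_nat_add_iff' 1).2 hasSum_zeta_two
    simpa using this
  have H4 := (H2.add (H3.mul_left (m * t : ℝ)⁻¹)).mul_left (R.card : ℝ)
  refine hasSum_le ?_ H1 H4
  intro k
  have hk : (0 : ℝ) < k + 1 := by positivity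
  set y := Real.exp (-t) ^ (k+1) with hy
  have hy0 : 0 < y := by positivity
  have hy1 : y < 1 := pow_lt_one₀ hx0.le hx1 (by omega)
  have hb := aux_residue m hm R n S hS y hy0 hy1
  have hym : y ^ m * (1 - y ^ m)⁻¹ ≤ (m * t)⁻¹ * (1 / ((k : ℝ)+1)) := by
    have hexp : y ^ m = Real.exp (-(m * t * (k+1))) := by
      rw [hy, ← pow_mul, ← Real.exp_nat_mul]
      push_cast
      ring_nf
    set u : ℝ := m * t * (k+1) with hu
    have hu0 : 0 < u := by positivity
    have h1 : y ^ m < 1 := pow_lt_one₀ hy0.le hy1 hm.ne'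
    have h2 : u + 1 ≤ Real.exp u := Real.add_one_le_exp u
    have h3 : y ^ m * Real.exp u = 1 := by
      rw [hexp, ← Real.exp_add]; simp
    have h4 : 0 < y ^ m := by positivity
    have h5 : (m * t : ℝ)⁻¹ * (1 / ((k : ℝ)+1)) = 1 / u := by
      rw [hu]; field_simp
    rw [h5, ← div_eq_mul_inv, div_le_div_iff₀ (by linarith) hu0]
    nlinarith
  have hlhs : ∑ a ∈ S, (Real.exp (-t) ^ a) ^ (k+1) / ((k : ℝ)+1) = (∑ a ∈ S, y ^ a) / (k+1) := by
    rw [Finset.sum_div]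
    apply Finset.sum_congr rfl
    intro a _
    rw [hy, ← pow_mul, ← pow_mul, mul_comm]
  rw [hlhs, div_le_iff₀ hk]
  have hR0 : (0 : ℝ) ≤ R.card := Nat.cast_nonneg _
  calc _ ≤ _ := hb
    _ ≤ R.card * (y + (m * t)⁻¹ * (1 / ((k : ℝ)+1))) := by gcongr
    _ = _ := by field_simp

lemma aux_asymp (c K ε : ℝ) (hc : 0 < c) (hK : 0 < K) (hε : 0 < ε) :
    ∃ N : ℕ, ∀ n : ℕ, N ≤ n → c * Real.log (1 + 2 / K * Real.sqrt n) ≤ ε * (K * Real.sqrt n) := by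
  have h1 := (Real.isLittleO_log_id_atTop).def
    (c := ε * K / (c * (1 + 2 / K))) (by positivity)
  have h2 : Filter.Tendsto (fun n : ℕ => 1 + 2 / K * Real.sqrt n) Filter.atTop Filter.atTop := by
    apply Filter.tendsto_atTop_add_const_left
    apply Filter.Tendsto.const_mul_atTop (by positivity)
    exact Real.tendsto_sqrt_atTop.comp tendsto_natCast_atTop_atTop
  have h3 := (h2.eventually h1).and (Filter.eventually_ge_atTop 1)
  obtain ⟨N, hN⟩ := Filter.eventually_atTop.1 h3
  refine ⟨N, fun n hn => ?_⟩
  obtain ⟨ha, hb⟩ := hN n hn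
  have hs : 1 ≤ Real.sqrt n := by
    rw [Real.one_le_sqrt]; exact_mod_cast hb
  have hu : 0 < 1 + 2 / K * Real.sqrt n := by positivity
  simp only [id, Real.norm_eq_abs, abs_of_pos hu] at ha
  have ha' := (le_abs_self _).trans ha
  calc c * Real.log (1 + 2 / K * Real.sqrt n)
      ≤ c * (ε * K / (c * (1 + 2 / K)) * (1 + 2 / K * Real.sqrt n)) := by gcongr
    _ ≤ c * (ε * K / (c * (1 + 2 / K)) * ((1 + 2 / K) * Real.sqrt n)) := by
      gcongr
      linarith
    _ = _ := by field_simp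

theorem stmt_2 (m : ℕ) (hm : 0 < m) (R : Finset ℕ) (hR : R ⊆ Finset.range m)
    (A : Set ℕ) (hA : A = {a : ℕ | 0 < a ∧ a % m ∈ R}) :
    ∀ ε : ℝ, 0 < ε → ∃ N : ℕ, ∀ n : ℕ, N ≤ n →
      (partitionsIn A n : ℝ) ≤
        Real.exp ((1 + ε) * Real.pi * Real.sqrt (2 * n * R.card / (3 * m))) := by
  classical
  intro ε hε
  rcases Finset.eq_empty_or_nonempty R with hRe | hRn
  · refine ⟨1, fun n hn => ?_⟩
    have : partitionsIn A n = 0 := by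
      unfold partitionsIn
      rw [Nat.card_eq_zero]
      left
      constructor
      rintro ⟨p, hp⟩
      have hp0 : p.parts = 0 := by
        apply Multiset.eq_zero_of_forall_notMem
        intro a ha
        have := hp a ha
        rw [hA, hRe] at this
        simp at this
      have := p.parts_sum
      rw [hp0] at this
      simp at this
      omega
    rw [this]
    simp only [Nat.cast_zero]
    exact (Real.exp_pos _).le
  · have hc : (0 : ℝ) < R.card := by exact_mod_cast hRn.card_pos
    have hm' : (0 : ℝ) < m := by exact_mod_cast hm
    set c : ℝ := (R.card : ℝ) with hcdef
    set K : ℝ := Real.pi * Real.sqrt (2 * c / (3 * m)) with hKdef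
    have hK : 0 < K := by
      have := Real.pi_pos
      positivity
    have hK2 : K ^ 2 = Real.pi ^ 2 * (2 * c / (3 * m)) := by
      rw [hKdef, mul_pow, Real.sq_sqrt (by positivity)]
    obtain ⟨N, hN⟩ := aux_asymp c K ε hc hK hε
    refine ⟨max N 1, fun n hn => ?_⟩
    have hn1 : 1 ≤ n := le_trans (le_max_right _ _) hn
    have hnN : N ≤ n := le_trans (le_max_left _ _) hn
    have has := hN n hnN
    have hn0 : (0 : ℝ) < n := by exact_mod_cast hn1
    set s := Real.sqrt n with hs
    have hs0 : 0 < s := Real.sqrt_pos.2 hn0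
    have hs2 : s ^ 2 = n := Real.sq_sqrt hn0.le
    have hB : (1 + ε) * Real.pi * Real.sqrt (2 * n * c / (3 * m)) = (1 + ε) * (K * s) := by
      have : 2 * (n : ℝ) * c / (3 * m) = (2 * c / (3 * m)) * n := by ring
      rw [this, Real.sqrt_mul (by positivity), hKdef]
      ring
    rw [hB]
    set t := K / (2 * s) with htdef
    have ht : 0 < t := by positivity
    let S := (Finset.Icc 1 n).filter (fun a => a ∈ A)
    have hS : ∀ a, a ∈ S ↔ (a ∈ A ∧ 1 ≤ a ∧ a ≤ n) := by
      intro a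
      simp only [S, Finset.mem_filter, Finset.mem_Icc]
      tauto
    have hS' : ∀ a ∈ S, (a % m ∈ R ∧ 1 ≤ a ∧ a ≤ n) := by
      intro a ha
      have h := (hS a).1 ha
      refine ⟨?_, h.2⟩
      have h1 := h.1
      rw [hA] at h1
      exact h1.2
    have hx0 : 0 < Real.exp (-t) := Real.exp_pos _
    have hx1 : Real.exp (-t) < 1 := by
      rw [Real.exp_lt_one_iff]; linarith
    have h1 := aux_partition_bound A n S hS _ hx0 hx1
    have h2 := aux_log m hm R n S hS' t ht
    have hprod : ∏ a ∈ S, (1 - Real.exp (-t) ^ a)⁻¹ =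
        Real.exp (∑ a ∈ S, -Real.log (1 - Real.exp (-t) ^ a)) := by
      rw [Real.exp_sum]
      apply Finset.prod_congr rfl
      intro a ha
      have : Real.exp (-t) ^ a < 1 := pow_lt_one₀ hx0.le hx1 (by have := hS' a ha; omega)
      rw [Real.exp_neg (Real.log _), Real.exp_log (by linarith)]
    have hlog : -Real.log (1 - Real.exp (-t)) ≤ Real.log (1 + 2 / K * s) := by
      rw [← Real.log_inv]
      have hpos : 0 < 1 - Real.exp (-t) := by linarith
      apply Real.log_le_log (by positivity)
      have e1 : 2 / K * s = 1 / t := by rw [htdef]; field_simp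
      rw [e1, inv_le_iff_one_le_mul₀ hpos]
      have e2 : t + 1 ≤ Real.exp t := Real.add_one_le_exp t
      have e3 : Real.exp (-t) * Real.exp t = 1 := by rw [← Real.exp_add]; simp
      have e4 : Real.exp (-t) * (t + 1) ≤ 1 := by
        have := mul_le_mul_of_nonneg_left e2 hx0.le
        linarith
      have e5 : 1 + 1 / t = (t + 1) / t := by field_simp
      rw [e5, div_mul_eq_mul_div, le_div_iff₀ ht]
      nlinarith
    have hpow : Real.exp (-t) ^ n = Real.exp (-(n * t)) := by
      rw [← Real.exp_nat_mul]; ring_nf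
    rw [hprod, hpow] at h1
    have h3 : (partitionsIn A n : ℝ) ≤
        Real.exp (n * t + ∑ a ∈ S, -Real.log (1 - Real.exp (-t) ^ a)) := by
      rw [Real.exp_add]
      calc (partitionsIn A n : ℝ)
          = Real.exp (n * t) * (partitionsIn A n * Real.exp (-(n * t))) := by
            rw [mul_left_comm, ← Real.exp_add]; simp
        _ ≤ _ := by gcongr
    refine h3.trans (Real.exp_le_exp.2 ?_)
    have e1 : (n : ℝ) * t = K * s / 2 := by
      rw [htdef, ← hs2]; field_simp
    have e2 : c * ((m * t)⁻¹ * (Real.pi ^ 2 / 6)) = K * s / 2 := by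
      have : c * Real.pi ^ 2 = K ^ 2 * (3 * m) / 2 := by
        rw [hK2]; field_simp
      calc c * ((m * t)⁻¹ * (Real.pi ^ 2 / 6)) = (c * Real.pi ^ 2) * ((m * t)⁻¹ / 6) := by ring
        _ = _ := by
          rw [this, htdef]; field_simp; try norm_num
    have e3 := mul_le_mul_of_nonneg_left hlog hc.le
    rw [mul_add, e2] at h2
    rw [e1]
    linarith
end

section
/- Let m be a positive integer, R ⊆ {0,1,…,m−1}, let A be the set of positive integers a with (a mod m) ∈ R, and set c = π · √(2·|R| / (3·m)). Then for every natural number n, the number p_A(n) of partitions of n with all parts in A satisfies p_A(n) ≤ (n+1)^{|R|+1} · exp(c·√n). -/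
/-- Chernoff-type combinatorial bound: a partition is determined by its multiplicities. -/
lemma aux_comb (A : Set ℕ) [DecidablePred (· ∈ A)] (n : ℕ) (x : ℝ) (hx : 0 ≤ x) :
    (partitionsIn A n : ℝ) * x ^ n ≤
      ∏ a ∈ (Finset.Icc 1 n).filter (· ∈ A), ∑ i ∈ Finset.range (n + 1), x ^ (a * i) := by
  classical
  set s := (Finset.Icc 1 n).filter (· ∈ A) with hs
  rw [Finset.prod_sum]
  have hmem : ∀ p : {p : n.Partition // ∀ a ∈ p.parts, a ∈ A}, ∀ a ∈ p.1.parts, a ∈ s := by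
    intro p a ha
    simp only [hs, Finset.mem_filter, Finset.mem_Icc]
    exact ⟨⟨p.1.parts_pos ha, p.1.le_of_mem_parts ha⟩, p.2 a ha⟩
  let F : {p : n.Partition // ∀ a ∈ p.parts, a ∈ A} → ((a : ℕ) → a ∈ s → ℕ) :=
    fun p a _ => p.1.parts.count a
  have hsum : ∀ p : {p : n.Partition // ∀ a ∈ p.parts, a ∈ A},
      ∑ a ∈ s, a * p.1.parts.count a = n := by
    intro p
    have h1 := p.1.parts_sum
    rw [Finset.sum_multiset_count_of_subset p.1.parts s
      (fun a ha => hmem p a (Multiset.mem_toFinset.mp ha))] at h1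
    refine Eq.trans (Finset.sum_congr rfl fun a _ => ?_) h1
    simp [mul_comm]
  have hF : Function.Injective F := by
    intro p q hpq
    apply Subtype.ext
    apply Nat.Partition.ext
    ext a
    by_cases ha : a ∈ s
    · exact congrFun (congrFun hpq a) ha
    · rw [Multiset.count_eq_zero_of_notMem (fun h => ha (hmem p a h)),
        Multiset.count_eq_zero_of_notMem (fun h => ha (hmem q a h))]
  have hle : ∑ p : {p : n.Partition // ∀ a ∈ p.parts, a ∈ A},
      ∏ a ∈ s.attach, x ^ (a.1 * F p a.1 a.2) ≤
      ∑ p ∈ s.pi (fun _ => Finset.range (n + 1)), ∏ a ∈ s.attach, x ^ (a.1 * p a.1 a.2) := by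
    rw [← Finset.sum_image (s := Finset.univ) (g := F)
      (f := fun p => ∏ a ∈ s.attach, x ^ (a.1 * p a.1 a.2)) (fun _ _ _ _ h => hF h)]
    apply Finset.sum_le_sum_of_subset_of_nonneg
    · intro f hf
      obtain ⟨p, -, rfl⟩ := Finset.mem_image.mp hf
      rw [Finset.mem_pi]
      intro a ha
      have h2 : a * p.1.parts.count a ≤ n := by
        calc a * p.1.parts.count a ≤ ∑ a ∈ s, a * p.1.parts.count a :=
              Finset.single_le_sum (f := fun a => a * p.1.parts.count a)
                (fun _ _ => Nat.zero_le _) ha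
          _ = n := hsum p
      have h3 : 1 ≤ a := by
        simp only [hs, Finset.mem_filter, Finset.mem_Icc] at ha; exact ha.1.1
      have : p.1.parts.count a ≤ a * p.1.parts.count a := Nat.le_mul_of_pos_left _ h3
      simp only [F, Finset.mem_range]
      omega
    · intros
      exact Finset.prod_nonneg fun _ _ => pow_nonneg hx _
  refine le_trans (le_of_eq ?_) hle
  have : ∀ p : {p : n.Partition // ∀ a ∈ p.parts, a ∈ A},
      ∏ a ∈ s.attach, x ^ (a.1 * F p a.1 a.2) = x ^ n := by
    intro p
    rw [Finset.prod_pow_eq_pow_sum]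
    congr 1
    rw [Finset.sum_attach s (fun a => a * p.1.parts.count a), hsum p]
  rw [Finset.sum_congr rfl (fun p _ => this p)]
  simp [partitionsIn, Nat.card_eq_fintype_card]

/-- Bound for the logarithm of the truncated Euler product. -/
lemma aux_log_s3 (t : ℝ) (ht : 0 < t) (N : ℕ) :
    ∑ q ∈ Finset.range N, -Real.log (1 - Real.exp (-t) ^ (q + 1)) ≤ Real.pi ^ 2 / (6 * t) := by
  set y := Real.exp (-t) with hy
  have hy0 : 0 < y := Real.exp_pos _
  have hy1 : y < 1 := by rw [hy, Real.exp_lt_one_iff]; linarith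
  have h1 : ∀ q ∈ Finset.range N, HasSum (fun j : ℕ => (y ^ (q + 1)) ^ (j + 1) / ((j : ℝ) + 1))
      (-Real.log (1 - y ^ (q + 1))) := by
    intro q _
    apply Real.hasSum_pow_div_log_of_abs_lt_one
    rw [abs_of_pos (by positivity)]
    exact pow_lt_one₀ hy0.le hy1 (by omega)
  have h2 := hasSum_sum h1
  have h3 : HasSum (fun j : ℕ => (1 / t) * (1 / ((j + 1 : ℕ) : ℝ) ^ 2))
      ((1 / t) * (Real.pi ^ 2 / 6)) := by
    apply HasSum.mul_left
    have := (hasSum_nat_add_iff' 1).mpr hasSum_zeta_two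
    simpa using this
  refine (hasSum_le ?_ h2 h3).trans (le_of_eq (by field_simp))
  intro j
  rw [← Finset.sum_div]
  have hj : (0 : ℝ) < (j : ℝ) + 1 := by positivity
  set z := y ^ (j + 1) with hz
  have hz0 : 0 < z := by positivity
  have hz1 : z < 1 := pow_lt_one₀ hy0.le hy1 (by omega)
  have h4 : ∑ q ∈ Finset.range N, (y ^ (q + 1)) ^ (j + 1) = z * ∑ q ∈ Finset.range N, z ^ q := by
    rw [Finset.mul_sum]
    refine Finset.sum_congr rfl fun q _ => ?_
    rw [hz]; ring
  have h5 : ∑ q ∈ Finset.range N, z ^ q ≤ (1 - z)⁻¹ := by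
    rw [← tsum_geometric_of_lt_one hz0.le hz1]
    exact (summable_geometric_of_lt_one hz0.le hz1).sum_le_tsum _ (fun _ _ => by positivity)
  have h6 : z * (1 - z)⁻¹ ≤ 1 / (t * (j + 1)) := by
    have h7 : z * Real.exp (t * (j + 1)) = 1 := by
      rw [hz, hy, ← Real.exp_nat_mul, ← Real.exp_add, Real.exp_eq_one_iff]
      push_cast; ring
    have h8 := Real.add_one_le_exp (t * (j + 1))
    have h9 : z * (t * (j + 1) + 1) ≤ 1 := by
      exact (mul_le_mul_of_nonneg_left h8 hz0.le).trans h7.le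
    rw [← div_eq_mul_inv, div_le_div_iff₀ (by linarith) (by positivity)]
    linarith
  rw [h4, div_le_iff₀ hj]
  calc z * ∑ q ∈ Finset.range N, z ^ q ≤ z * (1 - z)⁻¹ := by gcongr
    _ ≤ _ := h6
    _ = _ := by push_cast; field_simp

lemma aux_prod (t : ℝ) (ht : 0 < t) (N : ℕ) :
    ∏ q ∈ Finset.range N, (1 - Real.exp (-t) ^ (q + 1))⁻¹ ≤ Real.exp (Real.pi ^ 2 / (6 * t)) := by
  have hy1 : Real.exp (-t) < 1 := by rw [Real.exp_lt_one_iff]; linarith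
  refine le_trans (le_of_eq ?_) (Real.exp_le_exp.mpr (aux_log_s3 t ht N))
  rw [Real.exp_sum]
  refine Finset.prod_congr rfl fun q _ => ?_
  have : Real.exp (-t) ^ (q + 1) < 1 := pow_lt_one₀ (Real.exp_pos _).le hy1 (by omega)
  rw [Real.exp_neg (Real.log _), Real.exp_log (by linarith)]

lemma aux_main (m : ℕ) (hm : 0 < m) (R : Finset ℕ) (n : ℕ) (s : ℝ) (hs : 0 < s) :
    (partitionsIn {a : ℕ | 0 < a ∧ a % m ∈ R} n : ℝ) * Real.exp (-s) ^ n ≤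
      (n + 1) ^ R.card * Real.exp (Real.pi ^ 2 / (6 * (m * s))) ^ R.card := by
  classical
  refine (aux_comb _ n _ (Real.exp_pos _).le).trans ?_
  have hm' : (0 : ℝ) < m := by exact_mod_cast hm
  set x := Real.exp (-s) with hx
  have hx0 : 0 < x := Real.exp_pos _
  have hx1 : x < 1 := by rw [hx, Real.exp_lt_one_iff]; linarith
  have hxm : x ^ m = Real.exp (-(m * s)) := by
    rw [hx, ← Real.exp_nat_mul]; congr 1; ring
  set y := Real.exp (-(m * s)) with hy
  have hy0 : 0 < y := Real.exp_pos _
  have hy1 : y < 1 := by rw [hy, Real.exp_lt_one_iff]; nlinarith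
  let G : ℕ → ℝ := fun q => if q = 0 then (n : ℝ) + 1 else (1 - y ^ q)⁻¹
  have hG1 : ∀ q, 1 ≤ G q := by
    intro q
    by_cases hq : q = 0
    · simp [G, hq]
    · simp only [G, hq, if_false]
      have h1 : y ^ q < 1 := pow_lt_one₀ hy0.le hy1 hq
      have h2 : 0 < y ^ q := by positivity
      exact (one_le_inv₀ (by linarith)).mpr (by linarith)
  set S := (Finset.Icc 1 n).filter (· ∈ {a : ℕ | 0 < a ∧ a % m ∈ R}) with hS
  have hg : ∀ a ∈ S, ∑ i ∈ Finset.range (n + 1), x ^ (a * i) ≤ G (a / m) := by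
    intro a _
    by_cases hq : a / m = 0
    · simp only [G, hq, if_true]
      calc ∑ i ∈ Finset.range (n + 1), x ^ (a * i) ≤ ∑ i ∈ Finset.range (n + 1), (1 : ℝ) :=
            Finset.sum_le_sum fun i _ => pow_le_one₀ hx0.le hx1.le
        _ = _ := by simp
    · simp only [G, hq, if_false]
      have h1 : y ^ (a / m) < 1 := pow_lt_one₀ hy0.le hy1 hq
      calc ∑ i ∈ Finset.range (n + 1), x ^ (a * i)
          ≤ ∑ i ∈ Finset.range (n + 1), (y ^ (a / m)) ^ i := by
            refine Finset.sum_le_sum fun i _ => ?_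
            rw [← hxm, ← pow_mul, ← pow_mul]
            apply pow_le_pow_of_le_one hx0.le hx1.le
            rw [← mul_assoc]
            exact Nat.mul_le_mul_right _ (Nat.mul_div_le a m)
        _ ≤ _ := by
            rw [← tsum_geometric_of_lt_one (by positivity) h1]
            exact (summable_geometric_of_lt_one (by positivity) h1).sum_le_tsum _
              (fun _ _ => by positivity)
  calc ∏ a ∈ S, ∑ i ∈ Finset.range (n + 1), x ^ (a * i)
      ≤ ∏ a ∈ S, G (a / m) :=
        Finset.prod_le_prod (fun _ _ => Finset.sum_nonneg fun _ _ => by positivity) hg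
    _ = ∏ p ∈ S.image (fun a => (a / m, a % m)), G p.1 := by
        rw [Finset.prod_image]
        intro a _ b _ hab
        simp only [Prod.mk.injEq] at hab
        rw [← Nat.div_add_mod a m, ← Nat.div_add_mod b m, hab.1, hab.2]
    _ ≤ ∏ p ∈ Finset.range (n + 1) ×ˢ R, G p.1 := by
        have hsub : S.image (fun a => (a / m, a % m)) ⊆ Finset.range (n + 1) ×ˢ R := by
          intro p hp
          obtain ⟨a, ha, rfl⟩ := Finset.mem_image.mp hp
          simp only [hS, Finset.mem_filter, Finset.mem_Icc, Set.mem_setOf_eq] at ha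
          simp only [Finset.mem_product, Finset.mem_range]
          exact ⟨by have := Nat.div_le_self a m; omega, ha.2.2⟩
        rw [← Finset.prod_sdiff hsub]
        refine le_mul_of_one_le_left (Finset.prod_nonneg fun p _ => by linarith [hG1 p.1]) ?_
        calc (1 : ℝ) = ∏ p ∈ (Finset.range (n + 1) ×ˢ R) \ S.image (fun a => (a / m, a % m)),
              (1 : ℝ) := by simp
          _ ≤ _ := Finset.prod_le_prod (fun _ _ => zero_le_one) (fun p _ => hG1 p.1)
    _ = (∏ q ∈ Finset.range (n + 1), G q) ^ R.card := by
        rw [Finset.prod_product]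
        simp [Finset.prod_pow]
    _ ≤ _ := by
        rw [← mul_pow]
        apply pow_le_pow_left₀ (Finset.prod_nonneg fun q _ => by linarith [hG1 q])
        rw [Finset.prod_range_succ', mul_comm]
        have : G 0 = (n : ℝ) + 1 := by simp [G]
        rw [this]
        apply mul_le_mul_of_nonneg_left _ (by positivity)
        refine le_trans (le_of_eq ?_) (aux_prod (m * s) (by positivity) n)
        exact Finset.prod_congr rfl fun q _ => by simp [G, hy]

theorem stmt_3 (m : ℕ) (hm : 0 < m) (R : Finset ℕ) (hR : R ⊆ Finset.range m)
    (A : Set ℕ) (hA : A = {a : ℕ | 0 < a ∧ a % m ∈ R})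
    (c : ℝ) (hc : c = Real.pi * Real.sqrt (2 * R.card / (3 * m))) (n : ℕ) :
    (partitionsIn A n : ℝ) ≤ (n + 1) ^ (R.card + 1) * Real.exp (c * Real.sqrt n) := by
  classical
  have hc0 : 0 ≤ c := by rw [hc]; positivity
  have hone : (1 : ℝ) ≤ (n + 1) ^ (R.card + 1) * Real.exp (c * Real.sqrt n) := by
    have h1 : (1 : ℝ) ≤ (n + 1) ^ (R.card + 1) := one_le_pow₀ (by simp)
    have h2 : 1 ≤ Real.exp (c * Real.sqrt n) := Real.one_le_exp (by positivity)
    nlinarith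
  by_cases htriv : n = 0 ∨ R.card = 0
  · refine le_trans ?_ hone
    have h := aux_comb A n 1 zero_le_one
    have he : (Finset.Icc 1 n).filter (· ∈ A) = ∅ := by
      rcases htriv with h | h
      · simp [h]
      · rw [Finset.card_eq_zero] at h
        simp [hA, h]
    rw [he] at h
    simpa using h
  push Not at htriv
  obtain ⟨hn, hk⟩ := htriv
  have hm' : (0 : ℝ) < m := by exact_mod_cast hm
  have hn' : (0 : ℝ) < n := by exact_mod_cast Nat.pos_of_ne_zero hn
  have hk' : (0 : ℝ) < R.card := by exact_mod_cast Nat.pos_of_ne_zero hk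
  set k : ℝ := (R.card : ℝ) with hkdef
  set u := Real.sqrt (k / (6 * m * n)) with hu
  have hu0 : 0 < u := Real.sqrt_pos.mpr (by positivity)
  have hu2 : u ^ 2 * (6 * m * n) = k := by
    rw [hu, Real.sq_sqrt (by positivity)]; field_simp
  have hpi := Real.pi_pos
  have hcn : c * Real.sqrt n = 2 * Real.pi * n * u := by
    rw [hc, mul_assoc, ← Real.sqrt_mul (by positivity)]
    have : 2 * k / (3 * m) * n = (2 * n * u) ^ 2 := by
      rw [← hu2]; field_simp; ring
    rw [this, Real.sqrt_sq (by positivity)]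
    ring
  have h := aux_main m hm R n (Real.pi * u) (by positivity)
  rw [← hA, ← Real.exp_nat_mul, ← Real.exp_nat_mul] at h
  have e1 : (n : ℝ) * -(Real.pi * u) = -(Real.pi * n * u) := by ring
  have e2 : (R.card : ℝ) * (Real.pi ^ 2 / (6 * (m * (Real.pi * u)))) = Real.pi * n * u := by
    rw [← hkdef, ← hu2]; field_simp
  rw [e1, e2] at h
  have h' := mul_le_mul_of_nonneg_right h (Real.exp_pos (Real.pi * n * u)).le
  rw [mul_assoc (partitionsIn A n : ℝ), ← Real.exp_add, mul_assoc (_ ^ _), ← Real.exp_add] at h'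
  have e3 : -(Real.pi * n * u) + Real.pi * n * u = 0 := by ring
  have e4 : Real.pi * n * u + Real.pi * n * u = c * Real.sqrt n := by rw [hcn]; ring
  rw [e3, e4, Real.exp_zero, mul_one] at h'
  refine h'.trans ?_
  apply mul_le_mul_of_nonneg_right _ (Real.exp_pos _).le
  exact pow_le_pow_right₀ (by linarith) (by omega)
end
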